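/- The 2^N + 1 subcubes in the family B are pairwise disjoint and their union is the whole hypercube Z_3^N. -/

import Mathlib

/-!
Write `s i` for the side (low or high) of the `i`-th component of `P_K`. The recursion says
`s i = s (i - 1) xor [i ∈ K]` for `i > 0`, and `K` has even cardinality exactly when the same
relation also holds at `i = 0` with `s (-1) := s (N - 1)` (`even_card_iff`). Hence the pairs
`(K, b)` with `K` even are the same as arbitrary cyclic binary words `s`, and `v ∈ P_K` says that
for every `i` in the cycle, `s i` is the side of `v i` if `v i ≠ 1`, and the opposite of `s (i - 1)`
if `v i = 1`; that is, `s i = step (v i) (s (i - 1))`.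

So for a given `v` the subcubes containing it correspond to the fixed points `c = s (N - 1)` of the
map `c ↦ orbit v c N` obtained by going once around the cycle. If some `v i ≠ 1`, this map is
constant and has exactly one fixed point; if `v` is all ones, it is `c ↦ !c`, because `N` is odd,
and has none. This gives disjointness and covering. For the cardinality, complementation exchanges
even and odd subsets when `N` is odd, so there are `2 ^ N` pairs `(K, b)`; they give distinct
subcubes since these are disjoint and nonempty.
-/

open scoped BigOperators

namespace SNL

/-- `side N K b i` is `false` if the `i`-th component (0-based) of the subcube `P_K`
(`b = false` for `C`, `b = true` for `D`) is of "low" type (`{0}` or `{0,1}`),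
and `true` if it is of "high" type (`{2}` or `{1,2}`), following the recursive
definition: the first component is low for `C` and high for `D`, and the type flips
from component `i` to `i+1` exactly when coordinate `i+1` belongs to `K`. -/
def side (N : ℕ) (K : Finset (Fin N)) (b : Bool) : ℕ → Bool
  | 0 => b
  | i + 1 => Bool.xor (side N K b i) (decide ((i + 1) ∈ K.image Fin.val))

/-- The `i`-th component of the subcube `C_K` (`b = false`) or `D_K` (`b = true`). -/
def comp (N : ℕ) (K : Finset (Fin N)) (b : Bool) (i : Fin N) : Finset (Fin 3) :=
  if i ∈ K then (if side N K b i.val then {1, 2} else {0, 1})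
  else (if side N K b i.val then {2} else {0})

/-- The subcube `C_K` (`b = false`) or `D_K` (`b = true`) as a set of vectors. -/
def cube (N : ℕ) (K : Finset (Fin N)) (b : Bool) : Set (Fin N → Fin 3) :=
  {v | ∀ i, v i ∈ comp N K b i}

/-- The central subcube `B₀ = {1} × ⋯ × {1}`. -/
def B0 (N : ℕ) : Set (Fin N → Fin 3) := {v | ∀ i, v i = 1}

/-- The family `B` consisting of `B₀` together with `C_K`, `D_K` for all even `K`. -/
def family (N : ℕ) : Set (Set (Fin N → Fin 3)) :=
  {B0 N} ∪ {S | ∃ K b, Even K.card ∧ S = cube N K b}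

/-- The sign `±1` attached to a Boolean sign vector (`true ↦ +1`, `false ↦ -1`). -/
def sgn (N : ℕ) (ε : Fin N → Bool) (i : Fin N) : ℂ := if ε i then 1 else -1

/-- The local factor `g_i` of the product state `|P_K; ε⟩`. -/
def gfun (N : ℕ) (K : Finset (Fin N)) (b : Bool) (ε : Fin N → Bool) (i : Fin N) :
    Fin 3 → ℂ :=
  if i ∈ K then
    (if side N K b i.val then (fun t => if t = 1 then 1 else if t = 2 then sgn N ε i else 0)
     else (fun t => if t = 0 then 1 else if t = 1 then sgn N ε i else 0))
  else
    (if side N K b i.val then (fun t => if t = 2 then 1 else 0)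
     else (fun t => if t = 0 then 1 else 0))

/-- The product state `|P_K; ε⟩` as a function `Z₃^N → ℂ`. -/
def prodState (N : ℕ) (K : Finset (Fin N)) (b : Bool) (ε : Fin N → Bool) :
    (Fin N → Fin 3) → ℂ :=
  fun v => ∏ i, gfun N K b ε i (v i)

/-- The inner product on `H = (Z₃^N → ℂ)`. -/
noncomputable def innerH (N : ℕ) (ψ φ : (Fin N → Fin 3) → ℂ) : ℂ :=
  ∑ v, (starRingEnd ℂ) (ψ v) * φ v

/-- The state `|B₀⟩`, the indicator function of the all-ones vector. -/
def B0state (N : ℕ) : (Fin N → Fin 3) → ℂ :=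
  fun v => if v = (fun _ => 1) then 1 else 0

/-- A product vector in `H`. -/
def IsProdVec (N : ℕ) (ψ : (Fin N → Fin 3) → ℂ) : Prop :=
  ∃ f : Fin N → Fin 3 → ℂ, ∀ v, ψ v = ∏ i, f i (v i)

/-- The stopper state `|S⟩ = (|0⟩+|1⟩+|2⟩)^{⊗N}`, i.e. the constant function 1. -/
def stateS (N : ℕ) : (Fin N → Fin 3) → ℂ := fun _ => 1

/-- The orthogonal product set `O` of the `3^N - 1` states `|P_K; ε⟩`. -/
def setO (N : ℕ) : Set ((Fin N → Fin 3) → ℂ) :=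
  {ψ | ∃ K b ε, Even K.card ∧ ψ = prodState N K b ε}

/-- The unextendible product basis `U`. -/
def setU (N : ℕ) : Set ((Fin N → Fin 3) → ℂ) :=
  {stateS N} ∪
    {ψ | ∃ K b ε, Even K.card ∧ (∃ i ∈ K, ε i = false) ∧ ψ = prodState N K b ε}

/-- Restriction of a vector to the coordinates other than `m`. -/
def res (N : ℕ) (m : Fin N) (v : Fin N → Fin 3) : {i : Fin N // i ≠ m} → Fin 3 :=
  fun j => v j.1

/-- The operator `I_m ⊗ E` on `H`, where `E` is a matrix acting on the joint party
of all subsystems except `m`. -/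
noncomputable def opIE (N : ℕ) (m : Fin N)
    (E : Matrix ({i : Fin N // i ≠ m} → Fin 3) ({i : Fin N // i ≠ m} → Fin 3) ℂ)
    (ψ : (Fin N → Fin 3) → ℂ) : (Fin N → Fin 3) → ℂ :=
  fun v => ∑ v' : Fin N → Fin 3,
    if v' m = v m then E (res N m v) (res N m v') * ψ v' else 0

end SNL

namespace SNL

/-- The side `s i` forced by the entry `x = v i` and the previous side `p = s (i - 1)`:
`0` forces low, `2` forces high and `1` forces a flip. -/
def step (x : Fin 3) (p : Bool) : Bool :=
  if x = 0 then false else if x = 2 then true else !p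

/-- The sides forced by `v` when the side before coordinate `0` is `c`; the value at `k + 1` is the
side at coordinate `k`. It is constant from index `N` on. -/
def orbit {N : ℕ} (v : Fin N → Fin 3) (c : Bool) : ℕ → Bool
  | 0 => c
  | k + 1 => if h : k < N then step (v ⟨k, h⟩) (orbit v c k) else orbit v c k

lemma orbit_succ {N : ℕ} (v : Fin N → Fin 3) (c : Bool) (i : Fin N) :
    orbit v c (i.val + 1) = step (v i) (orbit v c i.val) := by
  simp [orbit]

/-- If `f` flips exactly at the elements of `K`, it returns to its initial value after `N` steps
if and only if `K` has even cardinality. -/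
lemma even_card_iff {N : ℕ} (f : ℕ → Bool) (K : Finset (Fin N))
    (h : ∀ i : Fin N, f (i.val + 1) = Bool.xor (f i.val) (decide (i ∈ K))) :
    Even K.card ↔ f N = f 0 := by
  have key : ∀ n ≤ N, (Even (K.filter (fun i => i.val < n)).card ↔ f n = f 0) := by
    intro n
    induction n with
    | zero => simp
    | succ n ih =>
      intro hn
      have ih := ih (by omega)
      have hs := h ⟨n, hn⟩
      simp only at hs
      rw [hs]
      by_cases hk : (⟨n, hn⟩ : Fin N) ∈ K
      · have : K.filter (fun i => i.val < n + 1)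
            = insert ⟨n, hn⟩ (K.filter (fun i => i.val < n)) := by
          ext i
          simp only [Finset.mem_filter, Finset.mem_insert, Fin.ext_iff]
          constructor
          · rintro ⟨h1, h2⟩
            by_cases h3 : i.val = n
            · exact Or.inl h3
            · exact Or.inr ⟨h1, by omega⟩
          · rintro (h1 | ⟨h1, h2⟩)
            · exact ⟨(Fin.ext h1 : i = ⟨n, hn⟩) ▸ hk, by omega⟩
            · exact ⟨h1, by omega⟩
        rw [this, Finset.card_insert_of_notMem (by simp), Nat.even_add_one, ih]
        simp only [hk, decide_true]
        cases f n <;> cases f 0 <;> simp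
      · have : K.filter (fun i => i.val < n + 1) = K.filter (fun i => i.val < n) := by
          ext i
          simp only [Finset.mem_filter]
          constructor
          · rintro ⟨h1, h2⟩
            have : i.val ≠ n := fun h3 => hk ((Fin.ext h3 : i = ⟨n, hn⟩) ▸ h1)
            exact ⟨h1, by omega⟩
          · rintro ⟨h1, h2⟩
            exact ⟨h1, by omega⟩
        rw [this, ih]
        simp [hk]
  have := key N le_rfl
  rwa [Finset.filter_true_of_mem (fun i _ => i.isLt)] at this

lemma mem_comp_iff {N : ℕ} (K : Finset (Fin N)) (b : Bool) (i : Fin N) (x : Fin 3) :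
    x ∈ comp N K b i ↔
      side N K b i.val = step x (Bool.xor (side N K b i.val) (decide (i ∈ K))) := by
  unfold comp step
  by_cases hK : i ∈ K <;> cases side N K b i.val <;> simp only [hK] <;> revert x <;> decide

lemma side_succ {N : ℕ} (K : Finset (Fin N)) (b : Bool) (k : ℕ) (hk : k + 1 < N) :
    side N K b (k + 1) = Bool.xor (side N K b k) (decide ((⟨k + 1, hk⟩ : Fin N) ∈ K)) := by
  have : (k + 1 ∈ K.image Fin.val) ↔ (⟨k + 1, hk⟩ : Fin N) ∈ K := by
    simp only [Finset.mem_image]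
    constructor
    · rintro ⟨i, hi, h⟩
      exact (Fin.ext h : i = ⟨k + 1, hk⟩) ▸ hi
    · intro h
      exact ⟨_, h, rfl⟩
  simp only [side, this]

/-- The recursion closes up cyclically at coordinate `0` when `K` is even. -/
lemma side_last {N : ℕ} (K : Finset (Fin N)) (b : Bool) (hN : 0 < N) (hK : Even K.card) :
    side N K b (N - 1) = Bool.xor b (decide ((⟨0, hN⟩ : Fin N) ∈ K)) := by
  let f : ℕ → Bool := fun n => match n with
    | 0 => Bool.xor b (decide ((⟨0, hN⟩ : Fin N) ∈ K))
    | k + 1 => side N K b k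
  have h := (even_card_iff f K ?_).1 hK
  · obtain ⟨M, rfl⟩ : ∃ M, N = M + 1 := ⟨N - 1, by omega⟩
    exact h
  · rintro ⟨i, hi⟩
    cases i with
    | zero =>
      change b = Bool.xor (Bool.xor b _) _
      simp
    | succ k => exact side_succ K b k hi

/-- If `v` lies in an even subcube, its orbit started at the last side is the sequence of sides,
shifted by one. The two conjuncts express it just before and just after coordinate `i`. -/
lemma orbit_of_mem {N : ℕ} (hN : 0 < N) {K : Finset (Fin N)} {b : Bool} (hK : Even K.card)
    {v : Fin N → Fin 3} (hv : v ∈ cube N K b) (i : ℕ) (hi : i < N) :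
    orbit v (side N K b (N - 1)) i
        = Bool.xor (side N K b i) (decide ((⟨i, hi⟩ : Fin N) ∈ K)) ∧
      orbit v (side N K b (N - 1)) (i + 1) = side N K b i := by
  have next : ∀ (j : ℕ) (hj : j < N), orbit v (side N K b (N - 1)) j
        = Bool.xor (side N K b j) (decide ((⟨j, hj⟩ : Fin N) ∈ K)) →
      orbit v (side N K b (N - 1)) (j + 1) = side N K b j := by
    intro j hj h
    have h1 := orbit_succ v (side N K b (N - 1)) ⟨j, hj⟩
    simp only at h1
    rw [h1, h]
    exact ((mem_comp_iff K b ⟨j, hj⟩ (v ⟨j, hj⟩)).1 (hv _)).symm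
  suffices h : orbit v (side N K b (N - 1)) i
        = Bool.xor (side N K b i) (decide ((⟨i, hi⟩ : Fin N) ∈ K)) from ⟨h, next i hi h⟩
  induction i with
  | zero => exact side_last K b hN hK
  | succ k ih =>
    rw [next k (by omega) (ih (by omega)), side_succ K b k hi]
    simp

lemma orbit_fixed_of_mem {N : ℕ} (hN : 0 < N) {K : Finset (Fin N)} {b : Bool}
    (hK : Even K.card) {v : Fin N → Fin 3} (hv : v ∈ cube N K b) :
    orbit v (side N K b (N - 1)) N = side N K b (N - 1) := by
  have := (orbit_of_mem hN hK hv (N - 1) (by omega)).2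
  rwa [Nat.sub_add_cancel hN] at this

/-- An entry different from `1` makes the orbit forget its starting value. -/
lemma orbit_indep {N : ℕ} {v : Fin N → Fin 3} (j : Fin N) (hj : v j ≠ 1) (c c' : Bool) :
    orbit v c N = orbit v c' N := by
  have key : ∀ n, j.val + 1 ≤ n → orbit v c n = orbit v c' n := by
    intro n hn
    induction n, hn using Nat.le_induction with
    | base =>
      rw [orbit_succ, orbit_succ]
      have : v j = 0 ∨ v j = 2 := by
        generalize v j = x at hj
        revert x
        decide
      rcases this with h | h <;> simp [step, h]
    | succ n _ ih => simp [orbit, ih]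
  exact key N j.isLt

lemma orbit_ones {N : ℕ} (hodd : Odd N) {v : Fin N → Fin 3} (hv : ∀ i, v i = 1) (c : Bool) :
    orbit v c N ≠ c := by
  have h := even_card_iff (orbit v c) Finset.univ (fun i => by
    rw [orbit_succ, hv i]
    simp [step])
  rw [Finset.card_univ, Fintype.card_fin] at h
  exact fun h1 => (Nat.not_even_iff_odd.2 hodd) (h.2 h1)

/-- A point lies in at most one even subcube. -/
lemma unique_of_mem {N : ℕ} (hN : 0 < N) (hodd : Odd N) {K K' : Finset (Fin N)} {b b' : Bool}
    (hK : Even K.card) (hK' : Even K'.card) {v : Fin N → Fin 3}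
    (hv : v ∈ cube N K b) (hv' : v ∈ cube N K' b') : (K, b) = (K', b') := by
  have h1 := orbit_fixed_of_mem hN hK hv
  have h2 := orbit_fixed_of_mem hN hK' hv'
  obtain ⟨j, hj⟩ : ∃ j, v j ≠ 1 := by
    by_contra! h
    exact orbit_ones hodd h _ h1
  have hc : side N K b (N - 1) = side N K' b' (N - 1) := by
    rw [← h1, ← h2]
    exact orbit_indep j hj _ _
  have hs : ∀ i < N, side N K b i = side N K' b' i := by
    intro i hi
    rw [← (orbit_of_mem hN hK hv i hi).2, ← (orbit_of_mem hN hK' hv' i hi).2, hc]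
  have hb : b = b' := hs 0 hN
  have hKK : K = K' := by
    ext i
    have e1 := (orbit_of_mem hN hK hv i i.isLt).1
    have e2 := (orbit_of_mem hN hK' hv' i i.isLt).1
    rw [← hc, ← hs i i.isLt, e1] at e2
    simpa using e2
  rw [hb, hKK]

/-- Every fixed point of the map `c ↦ orbit v c N` comes from an even subcube containing `v`. -/
lemma exists_of_fixed {N : ℕ} {v : Fin N → Fin 3} {c : Bool} (hc : orbit v c N = c) :
    ∃ K b, Even K.card ∧ v ∈ cube N K b := by
  let K : Finset (Fin N) := Finset.univ.filter
    (fun i => orbit v c (i.val + 1) ≠ orbit v c i.val)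
  have hflip : ∀ i : Fin N,
      orbit v c (i.val + 1) = Bool.xor (orbit v c i.val) (decide (i ∈ K)) := by
    intro i
    simp only [K, Finset.mem_filter, Finset.mem_univ, true_and]
    cases orbit v c (i.val + 1) <;> cases orbit v c i.val <;> rfl
  have hside : ∀ i < N, side N K (orbit v c 1) i = orbit v c (i + 1) := by
    intro i hi
    induction i with
    | zero => rfl
    | succ k ih =>
      rw [side_succ _ _ _ hi, ih (by omega)]
      exact (hflip ⟨k + 1, hi⟩).symm
  refine ⟨K, orbit v c 1, (even_card_iff _ K hflip).2 hc, fun i => ?_⟩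
  rw [mem_comp_iff, hside i i.isLt]
  have : Bool.xor (orbit v c (i.val + 1)) (decide (i ∈ K)) = orbit v c i.val := by
    rw [hflip i]
    simp
  rw [this, orbit_succ]

lemma cube_nonempty {N : ℕ} (K : Finset (Fin N)) (b : Bool) : (cube N K b).Nonempty := by
  refine ⟨fun i => if side N K b i.val then 2 else 0, fun i => ?_⟩
  by_cases hK : i ∈ K <;> cases hs : side N K b i.val <;> simp [comp, hK, hs]

/-- For odd `N`, each subset is `K` or `Kᶜ` for exactly one even `K`. -/
lemma card_even_pairs {N : ℕ} (hodd : Odd N) :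
    {p : Finset (Fin N) × Bool | Even p.1.card}.ncard = 2 ^ N := by
  have hcompl : ∀ K : Finset (Fin N), Even Kᶜ.card ↔ ¬ Even K.card := by
    intro K
    have h := Finset.card_add_card_compl K
    rw [Fintype.card_fin] at h
    rw [← h, Nat.odd_add] at hodd
    rw [← hodd, Nat.not_even_iff_odd]
  let g : Finset (Fin N) → Finset (Fin N) × Bool := fun K =>
    if Even K.card then (K, false) else (Kᶜ, true)
  have himg : {p : Finset (Fin N) × Bool | Even p.1.card} = Set.range g := by
    ext ⟨K, b⟩
    simp only [Set.mem_ofPred_eq, Set.mem_range, g]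
    constructor
    · intro h
      cases b with
      | false => exact ⟨K, by simp [h]⟩
      | true => exact ⟨Kᶜ, by simp [hcompl, h]⟩
    · rintro ⟨L, hL⟩
      split_ifs at hL with h
      · obtain ⟨rfl, rfl⟩ := Prod.mk.inj hL
        exact h
      · obtain ⟨rfl, rfl⟩ := Prod.mk.inj hL
        exact (hcompl L).2 h
  have hinj : Function.Injective g := by
    intro K L h
    simp only [g] at h
    split_ifs at h <;> simp_all
  rw [himg, ← Set.image_univ, Set.ncard_image_of_injective _ hinj, Set.ncard_univ]
  simp

/-- The `2^N + 1` subcubes in the family `B` are pairwise disjoint and their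
union is the whole hypercube `Z₃^N`. -/
theorem family_is_decomposition (N : ℕ) (hodd : Odd N) (hN : 3 ≤ N) :
    ((family N).ncard = 2 ^ N + 1) ∧
    (∀ K : Finset (Fin N), ∀ b : Bool, Even K.card →
        Disjoint (B0 N) (cube N K b)) ∧
    (∀ K K' : Finset (Fin N), ∀ b b' : Bool, Even K.card → Even K'.card →
        (K, b) ≠ (K', b') → Disjoint (cube N K b) (cube N K' b')) ∧
    (B0 N ∪ {v | ∃ K b, Even K.card ∧ v ∈ cube N K b} = Set.univ) := by
  have hpos : 0 < N := by omega
  have hB : ∀ K : Finset (Fin N), ∀ b : Bool, Even K.card →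
      Disjoint (B0 N) (cube N K b) := by
    intro K b hK
    rw [Set.disjoint_left]
    intro v hv hv'
    exact orbit_ones hodd hv _ (orbit_fixed_of_mem hpos hK hv')
  have hD : ∀ K K' : Finset (Fin N), ∀ b b' : Bool, Even K.card → Even K'.card →
      (K, b) ≠ (K', b') → Disjoint (cube N K b) (cube N K' b') := by
    intro K K' b b' hK hK' hne
    rw [Set.disjoint_left]
    intro v hv hv'
    exact hne (unique_of_mem hpos hodd hK hK' hv hv')
  refine ⟨?_, hB, hD, ?_⟩
  · have hfam : family N = insert (B0 N)
        ((fun p : Finset (Fin N) × Bool => cube N p.1 p.2) '' {p | Even p.1.card}) := by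
      ext S
      simp only [family, Set.mem_union, Set.mem_singleton_iff, Set.mem_ofPred_eq,
        Set.mem_insert_iff, Set.mem_image, Prod.exists]
      refine or_congr Iff.rfl ⟨?_, ?_⟩
      · rintro ⟨K, b, h, rfl⟩
        exact ⟨K, b, h, rfl⟩
      · rintro ⟨K, b, h, rfl⟩
        exact ⟨K, b, h, rfl⟩
    have hinj : Set.InjOn (fun p : Finset (Fin N) × Bool => cube N p.1 p.2)
        {p | Even p.1.card} := by
      rintro ⟨K, b⟩ hK ⟨K', b'⟩ hK' h
      obtain ⟨v, hv⟩ := cube_nonempty K b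
      have hv' : v ∈ cube N K' b' := (Set.ext_iff.1 h v).1 hv
      exact unique_of_mem hpos hodd hK hK' hv hv'
    rw [hfam, Set.ncard_insert_of_notMem, hinj.ncard_image, card_even_pairs hodd]
    rintro ⟨⟨K, b⟩, hK, h⟩
    obtain ⟨v, hv⟩ := cube_nonempty K b
    exact Set.disjoint_left.1 (hB K b hK) ((Set.ext_iff.1 h v).1 hv) hv
  · refine Set.eq_univ_of_forall fun v => ?_
    by_cases h : ∀ i, v i = 1
    · exact Or.inl h
    · push Not at h
      obtain ⟨j, hj⟩ := h
      exact Or.inr (exists_of_fixed (orbit_indep j hj (orbit v false N) false))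

end SNL
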